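/- arXiv:math/0203085 — 5 statements merged into one kernel-verified Lean document; each statement's English description precedes it below -/
import Mathlib

section
/- Let X be a finite-dimensional real normed space and let A be a ball in X. Let X_A denote the vector space X equipped with the norm given by the Minkowski (gauge) functional of A. Then A is a sufficient enlargement for X if and only if the L∞-factorable norm of the identity map from X to X_A is at most 1; that is, if and only if inf{‖u₁‖·‖u₂‖ : u₁ : X → ℓ∞ and u₂ : ℓ∞ → X_A are bounded linear maps with u₂ ∘ u₁ = id_X} ≤ 1, where ℓ∞ is the Banach space of bounded real sequences with the supremum norm. -/
open Set Metric MeasureTheory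
open scoped Pointwise ENNReal

/-- A *ball* in a normed space: a bounded closed convex set, symmetric with
respect to `0`, with nonempty interior. -/
def IsBall {X : Type*} [NormedAddCommGroup X] [NormedSpace ℝ X] (A : Set X) : Prop :=
  Bornology.IsBounded A ∧ IsClosed A ∧ Convex ℝ A ∧ (∀ x ∈ A, -x ∈ A) ∧ (interior A).Nonempty

/-- `A` is a sufficient enlargement for `X`: for every isometric embedding of `X`
into a Banach space `Y` there is a continuous linear projection `P : Y → X`
(i.e. `P ∘ i = id`) with `P (B(Y)) ⊆ A`. -/
def IsSufficientEnlargement {X : Type*} [NormedAddCommGroup X] [NormedSpace ℝ X]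
    (A : Set X) : Prop :=
  ∀ (Y : Type) [NormedAddCommGroup Y] [NormedSpace ℝ Y] [CompleteSpace Y],
    ∀ i : X →ₗᵢ[ℝ] Y, ∃ P : Y →L[ℝ] X, (∀ x, P (i x) = x) ∧ P '' closedBall 0 1 ⊆ A

/-- Assemble a bounded sequence of functionals into a map to `ℓ∞`. -/
lemma exists_toLinfty {Y : Type*} [NormedAddCommGroup Y] [NormedSpace ℝ Y]
    (φ : ℕ → (Y →L[ℝ] ℝ)) (C : ℝ) (hC : 0 ≤ C) (h : ∀ n, ‖φ n‖ ≤ C) :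
    ∃ T : Y →L[ℝ] lp (fun _ : ℕ => ℝ) ∞, (∀ y n, (T y : ℕ → ℝ) n = φ n y) ∧ ‖T‖ ≤ C := by
  have hb : ∀ y n, ‖φ n y‖ ≤ C * ‖y‖ := fun y n =>
    ((φ n).le_opNorm y).trans (mul_le_mul_of_nonneg_right (h n) (norm_nonneg y))
  have hm : ∀ y, Memℓp (fun n => φ n y) ∞ := fun y =>
    memℓp_infty ⟨C * ‖y‖, by rintro _ ⟨n, rfl⟩; exact hb y n⟩
  let L : Y →ₗ[ℝ] lp (fun _ : ℕ => ℝ) ∞ :=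
    { toFun := fun y => ⟨fun n => φ n y, hm y⟩
      map_add' := fun x y => by ext n; simp; rfl
      map_smul' := fun c y => by ext n; simp }
  refine ⟨L.mkContinuous C fun y => ?_, fun y n => rfl, LinearMap.mkContinuous_norm_le _ hC _⟩
  exact lp.norm_le_of_forall_le (mul_nonneg hC (norm_nonneg y)) (hb y)

/-- A separable space embeds linearly and isometrically into `ℓ∞`. -/
lemma exists_isometry_linfty (X : Type*) [NormedAddCommGroup X] [NormedSpace ℝ X]
    [TopologicalSpace.SeparableSpace X] :
    Nonempty (X →ₗᵢ[ℝ] lp (fun _ : ℕ => ℝ) ∞) := by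
  choose φ hφ1 hφ2 using fun n => exists_dual_vector'' ℝ (TopologicalSpace.denseSeq X n)
  obtain ⟨T, hT, hT1⟩ := exists_toLinfty φ 1 zero_le_one hφ1
  refine ⟨⟨T.toLinearMap, fun x => le_antisymm ?_ ?_⟩⟩
  · simpa using T.le_of_opNorm_le hT1 x
  · refine le_of_forall_pos_le_add fun ε hε => ?_
    obtain ⟨n, hn⟩ := (TopologicalSpace.denseRange_denseSeq X).exists_dist_lt x (half_pos hε)
    set d := TopologicalSpace.denseSeq X n
    have h1 : ‖φ n x‖ ≤ ‖T x‖ := by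
      rw [← hT]; exact lp.norm_apply_le_norm (by simp) (T x) n
    have h2 : ‖φ n (d - x)‖ ≤ 1 * ‖d - x‖ := (φ n).le_of_opNorm_le (hφ1 n) _
    rw [dist_eq_norm, norm_sub_rev] at hn
    have h3 : ‖x‖ ≤ ‖d‖ + ‖d - x‖ := by
      have := norm_sub_le d (d - x); simpa using this
    have h4 : φ n (d - x) = ‖d‖ - φ n x := by
      rw [map_sub]; congr 1; exact hφ2 n
    rw [h4] at h2
    have h5 := le_abs_self (‖d‖ - φ n x)
    have h6 := le_abs_self (φ n x)
    rw [Real.norm_eq_abs] at h1 h2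
    change ‖x‖ ≤ ‖T x‖ + ε
    linarith

/-- `ℓ∞` is injective: maps extend along isometric embeddings with the same norm bound. -/
lemma exists_extend_linfty {X Y : Type*} [NormedAddCommGroup X] [NormedSpace ℝ X]
    [NormedAddCommGroup Y] [NormedSpace ℝ Y] (i : X →ₗᵢ[ℝ] Y)
    (u : X →L[ℝ] lp (fun _ : ℕ => ℝ) ∞) :
    ∃ T : Y →L[ℝ] lp (fun _ : ℕ => ℝ) ∞, (∀ x, T (i x) = u x) ∧ ‖T‖ ≤ ‖u‖ := by
  have key : ∀ n : ℕ, ∃ g : Y →L[ℝ] ℝ, (∀ x, g (i x) = (u x : ℕ → ℝ) n) ∧ ‖g‖ ≤ ‖u‖ := by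
    intro n
    let e := i.equivRange
    let f₀ : LinearMap.range i.toLinearMap →ₗ[ℝ] ℝ :=
      { toFun := fun y => (u (e.symm y) : ℕ → ℝ) n
        map_add' := fun x y => by simp
        map_smul' := fun c y => by simp }
    have hf₀ : ∀ y, ‖f₀ y‖ ≤ ‖u‖ * ‖y‖ := fun y => by
      have h1 : ‖f₀ y‖ ≤ ‖u (e.symm y)‖ := lp.norm_apply_le_norm (by simp) (u (e.symm y)) n
      have h2 := u.le_opNorm (e.symm y)
      rw [LinearIsometryEquiv.norm_map] at h2
      exact h1.trans h2
    obtain ⟨g, hg, hgn⟩ := exists_extension_norm_eq _ (f₀.mkContinuous ‖u‖ hf₀)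
    refine ⟨g, fun x => ?_, hgn.le.trans (LinearMap.mkContinuous_norm_le _ (norm_nonneg u) _)⟩
    have := hg (e x)
    have h3 : ((e x : LinearMap.range i.toLinearMap) : Y) = i x := rfl
    rw [h3] at this
    rw [this]
    change (u (e.symm (e x)) : ℕ → ℝ) n = _
    rw [LinearIsometryEquiv.symm_apply_apply]
  choose g hg hgn using key
  obtain ⟨T, hT, hTn⟩ := exists_toLinfty g ‖u‖ (norm_nonneg u) hgn
  exact ⟨T, fun x => by ext n; rw [hT, hg], hTn⟩

lemma IsBall.nhds {X : Type*} [NormedAddCommGroup X] [NormedSpace ℝ X] {A : Set X}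
    (hA : IsBall A) : A ∈ nhds (0 : X) := by
  obtain ⟨-, -, hc, hs, x, hx⟩ := hA
  have hn : -x ∈ A := hs x (interior_subset hx)
  have := hc.openSegment_interior_self_subset_interior hx hn
  refine mem_interior_iff_mem_nhds.1 (this ⟨1/2, 1/2, by norm_num, by norm_num, by norm_num, ?_⟩)
  simp

lemma IsBall.gauge_bound {X : Type*} [NormedAddCommGroup X] [NormedSpace ℝ X] {A : Set X}
    (hA : IsBall A) : ∃ C : ℝ, 0 ≤ C ∧ ∀ x, gauge A x ≤ C * ‖x‖ := by
  obtain ⟨r, hr, h⟩ := Metric.mem_nhds_iff.1 hA.nhds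
  refine ⟨r⁻¹, by positivity, fun x => ?_⟩
  have := gauge_mono (absorbent_ball_zero hr) h x
  rw [gauge_ball hr.le] at this
  rw [inv_mul_eq_div]; exact this

lemma IsBall.gauge_le_one {X : Type*} [NormedAddCommGroup X] [NormedSpace ℝ X] {A : Set X}
    (hA : IsBall A) {x : X} (hx : gauge A x ≤ 1) : x ∈ A := by
  have h := (gauge_le_one_iff_mem_closure hA.2.2.1 hA.nhds).1 hx
  rwa [hA.2.1.closure_eq] at h

lemma IsBall.norm_bound {X : Type*} [NormedAddCommGroup X] [NormedSpace ℝ X] {A : Set X}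
    (hA : IsBall A) : ∃ R : ℝ, 0 < R ∧ ∀ x, ‖x‖ ≤ R * gauge A x := by
  obtain ⟨R, hR, h⟩ := hA.1.subset_ball_lt 0 0
  refine ⟨R, hR, fun x => ?_⟩
  have := gauge_mono (absorbent_nhds_zero hA.nhds) h x
  rw [gauge_ball hR.le, div_le_iff₀ hR] at this
  linarith

open Filter Topology in
/-- Compactness: almost-projections give an exact one. -/
lemma exists_limit {X Y : Type*} [NormedAddCommGroup X] [NormedSpace ℝ X]
    [FiniteDimensional ℝ X] [NormedAddCommGroup Y] [NormedSpace ℝ Y]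
    {A : Set X} (hA : IsBall A) (i : X →ₗᵢ[ℝ] Y)
    (h : ∀ ε : ℝ, 0 < ε → ∃ P : Y →L[ℝ] X, (∀ x, P (i x) = x) ∧
      ∀ y, gauge A (P y) ≤ (1 + ε) * ‖y‖) :
    ∃ P : Y →L[ℝ] X, (∀ x, P (i x) = x) ∧ ∀ y, gauge A (P y) ≤ ‖y‖ := by
  obtain ⟨R, hR, hRb⟩ := hA.norm_bound
  choose P hP hPg using fun n : ℕ => h (1 / ((n : ℝ) + 1)) (by positivity)
  let U : Ultrafilter ℕ := hyperfilter ℕ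
  have hPn : ∀ n y, ‖P n y‖ ≤ R * 2 * ‖y‖ := fun n y => by
    have h1 : 1 / ((n : ℝ) + 1) ≤ 1 := by
      rw [div_le_one (by positivity)]; linarith [(Nat.cast_nonneg n : (0 : ℝ) ≤ n)]
    have h2 : gauge A (P n y) ≤ 2 * ‖y‖ :=
      (hPg n y).trans (mul_le_mul_of_nonneg_right (by linarith) (norm_nonneg y))
    calc ‖P n y‖ ≤ R * gauge A (P n y) := hRb _
      _ ≤ R * (2 * ‖y‖) := mul_le_mul_of_nonneg_left h2 hR.le
      _ = _ := by ring
  have : ProperSpace X := FiniteDimensional.proper ℝ X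
  have hlim : ∀ y, ∃ x, Tendsto (fun n => P n y) U (𝓝 x) := fun y => by
    obtain ⟨x, -, hx⟩ := (isCompact_closedBall (0 : X) (R * 2 * ‖y‖)).ultrafilter_le_nhds
      (U.map fun n => P n y) (by
        rw [le_principal_iff]
        exact Filter.mem_map.2 (Filter.univ_mem' fun n => by simpa using hPn n y))
    exact ⟨x, hx⟩
  choose L hL using hlim
  let L' : Y →ₗ[ℝ] X :=
    { toFun := L
      map_add' := fun x y => tendsto_nhds_unique (hL (x + y))
        (by simpa using (hL x).add (hL y))
      map_smul' := fun c y => tendsto_nhds_unique (hL (c • y))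
        (by simpa using (hL y).const_smul c) }
  refine ⟨L'.mkContinuous (R * 2) fun y => ?_, fun x => ?_, fun y => ?_⟩
  · exact le_of_tendsto (hL y).norm (Eventually.of_forall fun n => hPn n y)
  · refine tendsto_nhds_unique (hL (i x)) ?_
    simp only [hP]; exact tendsto_const_nhds
  · have hg : Continuous (gauge A) := continuous_gauge hA.2.2.1 hA.nhds
    have h1 : Tendsto (fun n => gauge A (P n y)) U (𝓝 (gauge A (L y))) :=
      (hg.tendsto _).comp (hL y)
    have h2 : Tendsto (fun n : ℕ => (1 + 1 / ((n : ℝ) + 1)) * ‖y‖) U (𝓝 ((1 + 0) * ‖y‖)) :=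
      ((tendsto_one_div_add_atTop_nhds_zero_nat.mono_left Nat.hyperfilter_le_atTop).const_add
        1).mul_const _
    have := le_of_tendsto_of_tendsto' h1 h2 fun n => hPg n y
    rw [add_zero, one_mul] at this
    exact this

/-- Proposition 1: `A` is a sufficient enlargement for `X` iff the `L∞`-factorable
norm of the identity `X → X_A` (where `X_A` carries the gauge norm of `A`) is `≤ 1`,
i.e. `inf ‖u₁‖·‖u₂‖ ≤ 1` over factorizations `id = u₂ ∘ u₁` through `ℓ∞`.
The operator norm of `u₂ : ℓ∞ → X_A` is expressed as
`inf {M ≥ 0 | ∀ z, gauge A (u₂ z) ≤ M ‖z‖}`. -/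
theorem statement0 {X : Type} [NormedAddCommGroup X] [NormedSpace ℝ X]
    [FiniteDimensional ℝ X] (A : Set X) (hA : IsBall A) :
    IsSufficientEnlargement A ↔
      sInf {c : ℝ | ∃ (u₁ : X →L[ℝ] lp (fun _ : ℕ => ℝ) ∞)
          (u₂ : lp (fun _ : ℕ => ℝ) ∞ →L[ℝ] X),
        (∀ x, u₂ (u₁ x) = x) ∧
        c = ‖u₁‖ * sInf {M : ℝ | 0 ≤ M ∧ ∀ z, gauge A (u₂ z) ≤ M * ‖z‖}} ≤ 1 := by
  classical
  have : ProperSpace X := FiniteDimensional.proper ℝ X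
  obtain ⟨j⟩ := exists_isometry_linfty X
  constructor
  · intro h
    obtain ⟨P, hP, hPA⟩ := h _ j
    have hg : ∀ z, gauge A (P z) ≤ 1 * ‖z‖ := fun z => by
      rcases eq_or_ne z 0 with rfl | hz
      · simp
      · have hz' : 0 < ‖z‖ := norm_pos_iff.2 hz
        have hm : P (‖z‖⁻¹ • z) ∈ A := hPA ⟨_, by simp [norm_smul, hz], rfl⟩
        have := gauge_le_one_of_mem hm
        rw [map_smul, gauge_smul_of_nonneg (by positivity), smul_eq_mul, inv_mul_le_iff₀ hz'] at this
        linarith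
    refine le_trans (csInf_le ⟨0, ?_⟩ ⟨j.toContinuousLinearMap, P, hP, rfl⟩) ?_
    · rintro c ⟨u₁, u₂, -, rfl⟩
      exact mul_nonneg (norm_nonneg _) (Real.sInf_nonneg fun M hM => hM.1)
    · refine mul_le_one₀ j.norm_toContinuousLinearMap_le (Real.sInf_nonneg fun M hM => hM.1) ?_
      exact csInf_le ⟨0, fun M hM => hM.1⟩ ⟨zero_le_one, hg⟩
  · intro h Y _ _ _ i
    have hne : ∃ P : lp (fun _ : ℕ => ℝ) ∞ →L[ℝ] X, ∀ x, P (j x) = x := by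
      obtain ⟨g, hg⟩ := ContinuousLinearMap.exist_extension_of_finiteDimensional_range
        (j.equivRange.symm.toContinuousLinearEquiv : LinearMap.range j.toLinearMap →L[ℝ] X)
      refine ⟨g, fun x => ?_⟩
      have := DFunLike.congr_fun hg (j.equivRange x)
      simpa using this.symm
    obtain ⟨P₀, hP₀⟩ := hne
    obtain ⟨P, hP, hPg⟩ := exists_limit hA i (fun ε hε => by
      obtain ⟨c, ⟨u₁, u₂, hu, rfl⟩, hc⟩ := exists_lt_of_csInf_lt
        (by exact ⟨_, j.toContinuousLinearMap, P₀, hP₀, rfl⟩)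
        (h.trans_lt (by linarith : (1 : ℝ) < 1 + ε))
      set s := sInf {M : ℝ | 0 ≤ M ∧ ∀ z, gauge A (u₂ z) ≤ M * ‖z‖} with hs
      have hs0 : 0 ≤ s := Real.sInf_nonneg fun M hM => hM.1
      have hb : ∀ z, gauge A (u₂ z) ≤ s * ‖z‖ := fun z => by
        rcases eq_or_ne z 0 with rfl | hz
        · simp
        · have hz' : 0 < ‖z‖ := norm_pos_iff.2 hz
          rw [← div_le_iff₀ hz']
          obtain ⟨C, hC, hCb⟩ := hA.gauge_bound
          refine le_csInf ⟨C * ‖u₂‖, by positivity, fun w => ?_⟩ fun M hM => ?_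
          · rw [mul_assoc]
            exact (hCb _).trans (mul_le_mul_of_nonneg_left (u₂.le_opNorm w) hC)
          · rw [div_le_iff₀ hz']; exact hM.2 z
      obtain ⟨T, hT, hTn⟩ := exists_extend_linfty i u₁
      refine ⟨u₂.comp T, fun x => by simp [hT, hu], fun y => ?_⟩
      calc gauge A (u₂ (T y)) ≤ s * ‖T y‖ := hb _
        _ ≤ s * (‖u₁‖ * ‖y‖) := mul_le_mul_of_nonneg_left (T.le_of_opNorm_le hTn y) hs0
        _ = (‖u₁‖ * s) * ‖y‖ := by ring
        _ ≤ (1 + ε) * ‖y‖ := mul_le_mul_of_nonneg_right hc.le (norm_nonneg y))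
    refine ⟨P, hP, ?_⟩
    rintro _ ⟨y, hy, rfl⟩
    exact hA.gauge_le_one ((hPg y).trans (by simpa using hy))
end

section
/- Let G be a finite subgroup of the orthogonal group O(n) such that every linear operator on ℝⁿ commuting with all elements of G is a scalar multiple of the identity, and let y ∈ ℝⁿ with ‖y‖₂ = 1. Then the Minkowski sum of segments A = (n/|G|) · Σ_{g ∈ G} [−g(y), g(y)] is a sufficient enlargement for l₂ⁿ. -/
open Set Metric MeasureTheory
open scoped Pointwise ENNReal

/-- Theorem 4 (first part): if `G` is a finite subgroup of the orthogonal group of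
`ℝⁿ` whose commutant consists of scalar multiples of the identity, and `‖y‖ = 1`,
then `A = (n/|G|) Σ_{g ∈ G} [-g(y), g(y)]` is a sufficient enlargement for `l₂ⁿ`. -/
theorem statement7 {n : ℕ}
    (G : Subgroup (EuclideanSpace ℝ (Fin n) ≃ₗᵢ[ℝ] EuclideanSpace ℝ (Fin n)))
    [Fintype G]
    (hG : ∀ T : EuclideanSpace ℝ (Fin n) →ₗ[ℝ] EuclideanSpace ℝ (Fin n),
      (∀ g ∈ G, ∀ x, T (g x) = g (T x)) → ∃ c : ℝ, T = c • LinearMap.id)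
    (y : EuclideanSpace ℝ (Fin n)) (hy : ‖y‖ = 1) :
    IsSufficientEnlargement (((n : ℝ) / (Fintype.card G : ℝ)) •
      ∑ g : G, segment ℝ
        (-((g : EuclideanSpace ℝ (Fin n) ≃ₗᵢ[ℝ] EuclideanSpace ℝ (Fin n)) y))
        ((g : EuclideanSpace ℝ (Fin n) ≃ₗᵢ[ℝ] EuclideanSpace ℝ (Fin n)) y)) := by
  classical
  intro Y _ _ _ i
  have hcard : (0 : ℝ) < (Fintype.card G : ℝ) := by exact_mod_cast Fintype.card_pos
  have hn : (0 : ℝ) < (n : ℝ) := by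
    rcases Nat.eq_zero_or_pos n with h | h
    · subst h
      have : y = 0 := Subsingleton.elim _ _
      simp [this] at hy
    · exact_mod_cast h
  -- Hahn-Banach extension of a functional on `X` along the isometry
  have hext : ∀ v : EuclideanSpace ℝ (Fin n), ‖v‖ = 1 →
      ∃ f : Y →L[ℝ] ℝ, (∀ x, f (i x) = inner ℝ v x) ∧ ‖f‖ ≤ 1 := by
    intro v hv
    let e := i.equivRange
    let φ : (LinearMap.range i.toLinearMap) →L[ℝ] ℝ :=
      (innerSL ℝ v).comp (e.symm.toContinuousLinearEquiv : _ →L[ℝ] _)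
    obtain ⟨f, hf, hfn⟩ := exists_extension_norm_eq _ φ
    refine ⟨f, fun x => ?_, ?_⟩
    · have h1 := hf (e x)
      have h2 : φ (e x) = inner ℝ v x := by simp [φ]
      rw [h2] at h1
      exact h1
    · rw [hfn]
      refine ContinuousLinearMap.opNorm_le_bound _ zero_le_one (fun x => ?_)
      have h3 : φ x = inner ℝ v (e.symm x) := rfl
      rw [h3]
      refine (norm_inner_le_norm _ _).trans ?_
      rw [hv, e.symm.norm_map]
  have hgy : ∀ g : G, ‖(g : EuclideanSpace ℝ (Fin n) ≃ₗᵢ[ℝ] EuclideanSpace ℝ (Fin n)) y‖ = 1 := by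
    intro g; rw [LinearIsometryEquiv.norm_map, hy]
  choose f hf hfn using fun g : G => hext _ (hgy g)
  let T : EuclideanSpace ℝ (Fin n) →ₗ[ℝ] EuclideanSpace ℝ (Fin n) :=
    ∑ g : G, ((innerSL ℝ (g.1 y)).toLinearMap).smulRight (g.1 y)
  have hT : ∀ x, T x = ∑ g : G, (inner ℝ (g.1 y) x : ℝ) • g.1 y := by
    intro x; simp [T, LinearMap.sum_apply]
  obtain ⟨c, hc⟩ := hG T (by
    intro h hh x
    rw [hT, hT, map_sum]
    refine (Fintype.sum_equiv (Equiv.mulLeft (⟨h, hh⟩ : G)) _ _ (fun g => ?_)).symm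
    simp [LinearIsometryEquiv.inner_map_map])
  have hTc : ∀ x, T x = c • x := by intro x; rw [hc]; simp
  have htr : (Fintype.card G : ℝ) = c * n := by
    let b := EuclideanSpace.basisFun (Fin n) ℝ
    have h1 : ∑ j, inner ℝ (T (b j)) (b j) = c * n := by
      simp only [hTc, real_inner_smul_left, real_inner_self_eq_norm_sq, b.norm_eq_one]
      simp [mul_comm]
    rw [← h1]
    simp only [hT, sum_inner, real_inner_smul_left]
    rw [Finset.sum_comm]
    have h2 : ∀ g : G, ∑ j, (inner ℝ (g.1 y) (b j) : ℝ) * inner ℝ (g.1 y) (b j) = 1 := by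
      intro g
      have := b.sum_sq_inner_left (g.1 y)
      rw [hgy g] at this
      simpa [sq] using this
    simp [h2]
  let P : Y →L[ℝ] EuclideanSpace ℝ (Fin n) :=
    ((n : ℝ) / (Fintype.card G : ℝ)) • ∑ g : G, (f g).smulRight (g.1 y)
  have hP : ∀ z, P z = ((n : ℝ) / (Fintype.card G : ℝ)) • ∑ g : G, f g z • g.1 y := by
    intro z; simp [P]
  refine ⟨P, fun x => ?_, ?_⟩
  · rw [hP]
    simp only [hf]
    rw [← hT, hTc, smul_smul]
    have : (n : ℝ) / (Fintype.card G : ℝ) * c = 1 := by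
      rw [div_mul_eq_mul_div, div_eq_one_iff_eq hcard.ne', htr, mul_comm]
    rw [this, one_smul]
  · rintro _ ⟨z, hz, rfl⟩
    rw [hP]
    refine Set.smul_mem_smul_set (Set.finsetSum_mem_finsetSum _ _ _ (fun g _ => ?_))
    have hz1 : ‖z‖ ≤ 1 := by simpa using hz
    have hb : |f g z| ≤ 1 := by
      have := (f g).le_of_opNorm_le (hfn g) z
      rw [Real.norm_eq_abs] at this
      linarith
    obtain ⟨h1, h2⟩ := abs_le.mp hb
    refine ⟨(1 - f g z) / 2, (1 + f g z) / 2, by linarith, by linarith, by ring, ?_⟩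
    module
end

section
/- Identify ℝ^{n+m} with ℝⁿ ⊕ ℝ^m (Euclidean direct sum). If A₁ is a sufficient enlargement for l₂ⁿ and A₂ is a sufficient enlargement for l₂^m, then the Minkowski sum A₁ + A₂ (with A₁ ⊆ ℝⁿ × {0} and A₂ ⊆ {0} × ℝ^m) is a sufficient enlargement for l₂^{n+m}. -/
open Set Metric MeasureTheory
open scoped Pointwise ENNReal

/-- Key lemma: pass to the quotient of `Y` by the image of `Z`, in which `X` still embeds
isometrically. -/
theorem exists_extension_killing {X Z W : Type} [NormedAddCommGroup X] [NormedSpace ℝ X]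
    [NormedAddCommGroup Z] [NormedSpace ℝ Z] [FiniteDimensional ℝ Z]
    [NormedAddCommGroup W] [NormedSpace ℝ W]
    (j : X →ₗ[ℝ] W) (k : Z →ₗ[ℝ] W) (hj : ∀ x, ‖j x‖ ≤ ‖x‖)
    (hjk : ∀ x z, ‖x‖ ≤ ‖j x + k z‖) (A : Set X) (hA : IsSufficientEnlargement A)
    (Y : Type) [NormedAddCommGroup Y] [NormedSpace ℝ Y] [CompleteSpace Y] (i : W →ₗᵢ[ℝ] Y) :
    ∃ P : Y →L[ℝ] X, (∀ x z, P (i (j x + k z)) = x) ∧ ∀ y, ‖y‖ ≤ 1 → P y ∈ A := by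
  let S : Submodule ℝ Y := LinearMap.range (i.toLinearMap ∘ₗ k)
  have : FiniteDimensional ℝ S := by dsimp only [S]; infer_instance
  have hS : IsClosed (S : Set Y) := S.closed_of_finiteDimensional
  let f : X →ₗ[ℝ] (Y ⧸ S) := S.mkQ ∘ₗ i.toLinearMap ∘ₗ j
  have hle : ∀ y : Y, ‖(S.mkQ y)‖ ≤ ‖y‖ := fun y => Submodule.Quotient.norm_mk_le S y
  have hf : ∀ x, ‖f x‖ = ‖x‖ := by
    intro x
    apply le_antisymm
    · calc ‖f x‖ ≤ ‖i (j x)‖ := hle _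
        _ = ‖j x‖ := i.norm_map _
        _ ≤ ‖x‖ := hj x
    · apply le_of_forall_pos_lt_add
      intro ε hε
      obtain ⟨y, hy, hlt⟩ := Submodule.Quotient.norm_mk_lt (S := S) (f x) hε
      have h1 : y - i (j x) ∈ S := (Submodule.Quotient.eq S).1 hy
      obtain ⟨z, hz⟩ := h1
      have hz' : i (k z) = y - i (j x) := hz
      have h2 : y = i (j x + k z) := by rw [map_add, hz']; abel
      calc ‖x‖ ≤ ‖j x + k z‖ := hjk x z
        _ = ‖y‖ := by rw [h2, i.norm_map]
        _ < _ := hlt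
  obtain ⟨Q, hQ, hQA⟩ := hA (Y ⧸ S) ⟨f, hf⟩
  let q : Y →L[ℝ] (Y ⧸ S) := S.mkQ.mkContinuous 1 (fun y => by simpa using hle y)
  refine ⟨Q.comp q, ?_, ?_⟩
  · intro x z
    have h0 : q (i (k z)) = 0 := (Submodule.Quotient.mk_eq_zero S).2 ⟨z, rfl⟩
    have h1 : Q (q (i (j x))) = x := hQ x
    simp [map_add, h0, h1]
  · intro y hy
    apply hQA
    refine ⟨q y, ?_, rfl⟩
    rw [mem_closedBall_zero_iff]
    exact (hle y).trans hy

/-- If `A₁` and `A₂` are sufficient enlargements for `l₂ⁿ` and `l₂^m`, then the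
Minkowski sum `A₁ + A₂` (with `A₁ ⊆ ℝⁿ × {0}`, `A₂ ⊆ {0} × ℝ^m`) is a sufficient
enlargement for `l₂^{n+m} = l₂ⁿ ⊕₂ l₂^m`. -/
theorem statement11 {n m : ℕ}
    (A₁ : Set (EuclideanSpace ℝ (Fin n))) (A₂ : Set (EuclideanSpace ℝ (Fin m)))
    (hA₁ball : IsBall A₁) (hA₁ : IsSufficientEnlargement A₁)
    (hA₂ball : IsBall A₂) (hA₂ : IsSufficientEnlargement A₂) :
    IsSufficientEnlargement
      (((fun u : EuclideanSpace ℝ (Fin n) =>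
          (WithLp.equiv 2 (EuclideanSpace ℝ (Fin n) × EuclideanSpace ℝ (Fin m))).symm (u, 0)) '' A₁)
        + ((fun v : EuclideanSpace ℝ (Fin m) =>
          (WithLp.equiv 2 (EuclideanSpace ℝ (Fin n) × EuclideanSpace ℝ (Fin m))).symm (0, v)) '' A₂)) := by
  intro Y _ _ _ i
  let E := EuclideanSpace ℝ (Fin n)
  let F := EuclideanSpace ℝ (Fin m)
  let j : E →ₗ[ℝ] WithLp 2 (E × F) :=
    (WithLp.linearEquiv 2 ℝ (E × F)).symm.toLinearMap ∘ₗ LinearMap.inl ℝ E F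
  let k : F →ₗ[ℝ] WithLp 2 (E × F) :=
    (WithLp.linearEquiv 2 ℝ (E × F)).symm.toLinearMap ∘ₗ LinearMap.inr ℝ E F
  have hjk : ∀ x z, j x + k z = WithLp.toLp 2 (x, z) := by
    intro x z
    change WithLp.toLp 2 (x, 0) + WithLp.toLp 2 (0, z) = _
    rw [← WithLp.toLp_add]; simp
  have hj : ∀ x, ‖j x‖ ≤ ‖x‖ := fun x => (WithLp.norm_toLp_fst 2 E F x).le
  have hk : ∀ x, ‖k x‖ ≤ ‖x‖ := fun x => (WithLp.norm_toLp_snd 2 E F x).le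
  have h1 : ∀ x z, ‖x‖ ≤ ‖j x + k z‖ := by
    intro x z
    rw [hjk, WithLp.prod_norm_eq_of_L2]
    apply Real.le_sqrt_of_sq_le
    exact le_add_of_nonneg_right (sq_nonneg _)
  have h2 : ∀ z x, ‖z‖ ≤ ‖k z + j x‖ := by
    intro z x
    rw [add_comm, hjk, WithLp.prod_norm_eq_of_L2]
    apply Real.le_sqrt_of_sq_le
    exact le_add_of_nonneg_left (sq_nonneg _)
  obtain ⟨P₁, hP₁, hB₁⟩ := exists_extension_killing j k hj h1 A₁ hA₁ Y i
  obtain ⟨P₂, hP₂, hB₂⟩ := exists_extension_killing k j hk h2 A₂ hA₂ Y i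
  refine ⟨(WithLp.prodContinuousLinearEquiv 2 ℝ E F).symm.toContinuousLinearMap.comp
    (P₁.prod P₂), ?_, ?_⟩
  · intro w
    have e : w = j w.fst + k w.snd := by rw [hjk]; rfl
    have e1 : P₁ (i w) = w.fst := by
      conv_lhs => rw [e]
      exact hP₁ _ _
    have e2 : P₂ (i w) = w.snd := by
      conv_lhs => rw [e, add_comm]
      exact hP₂ _ _
    change WithLp.toLp 2 (P₁ (i w), P₂ (i w)) = w
    rw [e1, e2]; rfl
  · rintro _ ⟨y, hy, rfl⟩
    rw [mem_closedBall_zero_iff] at hy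
    exact ⟨_, ⟨P₁ y, hB₁ y hy, rfl⟩, _, ⟨P₂ y, hB₂ y hy, rfl⟩, hjk _ _⟩
end

section
/- Let X be ℝⁿ equipped with an arbitrary norm and let E be an ellipsoid of maximal volume contained in the closed unit ball B(X); that is, E = S(B₂ⁿ) for some invertible linear map S : ℝⁿ → ℝⁿ, where B₂ⁿ is the closed Euclidean unit ball, E ⊆ B(X), and the Lebesgue volume of E is greater than or equal to the Lebesgue volume of every ellipsoid contained in B(X). Then √n · E is a sufficient enlargement for X. -/
open Set Metric MeasureTheory
open scoped Pointwise ENNReal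

open Filter Topology in
/-- The convex hull of a compact set in a finite dimensional space is compact. -/
lemma ks_isCompact_convexHull {W : Type} [NormedAddCommGroup W] [NormedSpace ℝ W]
    [FiniteDimensional ℝ W] {C : Set W} (hC : IsCompact C) : IsCompact (convexHull ℝ C) := by
  have key : convexHull ℝ C = ⋃ k ∈ Finset.range (Module.finrank ℝ W + 2),
      (fun p : (Fin k → ℝ) × (Fin k → W) => ∑ i, p.1 i • p.2 i) ''
        (stdSimplex ℝ (Fin k) ×ˢ Set.pi Set.univ (fun _ => C)) := by
    ext x
    simp only [Set.mem_iUnion, Set.mem_image, Set.mem_prod, Finset.mem_range]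
    constructor
    · intro hx
      obtain ⟨ι, hι, z, w, hz, hai, hw, hw1, hx⟩ := eq_pos_convex_span_of_mem_convexHull hx
      refine ⟨Fintype.card ι, ?_, ⟨w ∘ (Fintype.equivFin ι).symm, z ∘ (Fintype.equivFin ι).symm⟩,
        ⟨⟨fun i => (hw _).le, ?_⟩, fun i _ => hz ⟨_, rfl⟩⟩, ?_⟩
      · have h1 := hai.card_le_finrank_succ
        have h2 := Submodule.finrank_le (vectorSpan ℝ (Set.range z))
        omega
      · rw [← hw1]
        exact (Fintype.equivFin ι).symm.sum_comp w
      · rw [← hx]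
        exact (Fintype.equivFin ι).symm.sum_comp (fun i => w i • z i)
    · rintro ⟨k, -, ⟨w, z⟩, ⟨hw, hz⟩, rfl⟩
      exact (convex_convexHull ℝ C).sum_mem (fun i _ => hw.1 i) hw.2
        (fun i _ => subset_convexHull ℝ C (hz i trivial))
  rw [key]
  refine Finset.isCompact_biUnion _ fun k _ => ?_
  refine ((isCompact_stdSimplex ℝ (Fin k)).prod (isCompact_univ_pi fun _ => hC)).image ?_
  fun_prop

open Filter Topology in
/-- Perturbation step. -/
lemma ks_perturb {V : Type} [NormedAddCommGroup V] [InnerProductSpace ℝ V] [CompleteSpace V]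
    (K : Set V) (hK : IsCompact K) (hK1 : ∀ f ∈ K, ‖f‖ ≤ 1) (L : V →L[ℝ] V)
    (hL : ∀ f ∈ K, ‖f‖ = 1 → inner ℝ f (L f) < 0) :
    ∀ᶠ t : ℝ in 𝓝 0, ∀ f ∈ K, 0 < t → ‖f + t • L f‖ ≤ 1 := by
  have aux : ∀ᶠ t : ℝ in 𝓝 0, ∀ f ∈ K, f ∈ K → 0 < t → ‖f + t • L f‖ ≤ 1 := by
    refine hK.eventually_forall_of_forall_eventually (P := fun t f => f ∈ K → 0 < t → ‖f + t • L f‖ ≤ 1) ?_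
    intro f hf
    rcases (hK1 f hf).lt_or_eq with h | h
    · have hc : Continuous (fun z : ℝ × V => ‖z.2 + z.1 • L z.2‖) := by fun_prop
      have := hc.continuousAt (x := ((0 : ℝ), f)) |>.eventually_lt
        (continuousAt_const (y := (1 : ℝ))) (by simpa using h)
      filter_upwards [this] with z hz _ _ using hz.le
    · have hc : Continuous (fun z : ℝ × V => 2 * inner ℝ z.2 (L z.2) + z.1 * ‖L z.2‖ ^ 2) := by
        fun_prop
      have := hc.continuousAt (x := ((0 : ℝ), f)) |>.eventually_lt
        (continuousAt_const (y := (0 : ℝ))) (by have := hL f hf h; simp; linarith)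
      filter_upwards [this] with z hz hzK hz0
      have h1 := hK1 _ hzK
      have h2 : ‖z.2 + z.1 • L z.2‖ ^ 2 =
          ‖z.2‖ ^ 2 + z.1 * (2 * inner ℝ z.2 (L z.2) + z.1 * ‖L z.2‖ ^ 2) := by
        rw [norm_add_sq_real, inner_smul_right, norm_smul, mul_pow, Real.norm_eq_abs, sq_abs]
        ring
      have h3 : z.1 * (2 * inner ℝ z.2 (L z.2) + z.1 * ‖L z.2‖ ^ 2) ≤ 0 :=
        mul_nonpos_of_nonneg_of_nonpos hz0.le hz.le
      have h4 : ‖z.2‖ ^ 2 ≤ 1 := pow_le_one₀ (norm_nonneg _) h1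
      have h5 : ‖z.2 + z.1 • L z.2‖ ^ 2 ≤ 1 := by rw [h2]; linarith
      exact (sq_le_one_iff₀ (norm_nonneg _)).1 h5
  filter_upwards [aux] with t ht f hf using ht f hf hf

open Filter Topology in
lemma ks_det {n : ℕ} (H : Matrix (Fin n) (Fin n) ℝ) (hH : 0 < H.trace) :
    ∀ᶠ t : ℝ in 𝓝 0, 0 < t → 1 < (1 + t • H).det := by
  set p := (Matrix.det (1 + (Polynomial.X : Polynomial ℝ) • H.map Polynomial.C)).divX.divX
  have hc : Continuous (fun t : ℝ => H.trace + p.eval t * t) := by fun_prop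
  have := (continuousAt_const (y := (0 : ℝ))).eventually_lt (hc.continuousAt (x := (0 : ℝ)))
    (by simpa using hH)
  filter_upwards [this] with t ht ht0
  rw [Matrix.det_one_add_smul]
  change 1 < 1 + H.trace * t + p.eval t * t ^ 2
  have := mul_pos ht ht0
  nlinarith

/-- Polar body of `{v : ‖S v‖ ≤ 1}` inside the Euclidean ball. -/
def ksPolar {n : ℕ} {X : Type} [NormedAddCommGroup X] [NormedSpace ℝ X]
    (S : EuclideanSpace ℝ (Fin n) ≃ₗ[ℝ] X) : Set (EuclideanSpace ℝ (Fin n)) :=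
  {f | ‖f‖ ≤ 1 ∧ ∀ v, inner ℝ f v ≤ ‖S v‖}

lemma ksPolar_compact {n : ℕ} {X : Type} [NormedAddCommGroup X] [NormedSpace ℝ X]
    (S : EuclideanSpace ℝ (Fin n) ≃ₗ[ℝ] X) : IsCompact (ksPolar S) := by
  have : ksPolar S = closedBall 0 1 ∩ ⋂ v, {f | inner ℝ f v ≤ ‖S v‖} := by
    ext f; simp [ksPolar]
  rw [this]
  refine (isCompact_closedBall _ _).inter_right (isClosed_iInter fun v => ?_)
  exact isClosed_le (by fun_prop) continuous_const

/-- Rank one matrix attached to a vector. -/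
def ksRank {n : ℕ} (f : EuclideanSpace ℝ (Fin n)) : Fin n → Fin n → ℝ := fun i j => f i * f j

open Filter Topology in
lemma ks_john {n : ℕ} (hn : 0 < n) {X : Type} [NormedAddCommGroup X] [NormedSpace ℝ X]
    (e : X ≃ₗ[ℝ] EuclideanSpace ℝ (Fin n)) (S : EuclideanSpace ℝ (Fin n) ≃ₗ[ℝ] X)
    (hS : ∀ v, ‖S v‖ ≤ ‖v‖)
    (hmax : ∀ T : EuclideanSpace ℝ (Fin n) ≃ₗ[ℝ] X,
      T '' closedBall (0 : EuclideanSpace ℝ (Fin n)) 1 ⊆ closedBall (0 : X) 1 →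
      volume (e '' (T '' closedBall (0 : EuclideanSpace ℝ (Fin n)) 1)) ≤
        volume (e '' (S '' closedBall (0 : EuclideanSpace ℝ (Fin n)) 1))) :
    (fun i j : Fin n => if i = j then (1 / n : ℝ) else 0) ∈
      convexHull ℝ (ksRank '' (ksPolar S ∩ sphere 0 1)) := by
  haveI : FiniteDimensional ℝ X := e.symm.finiteDimensional
  by_contra hp
  have hcomp : IsCompact (ksRank '' (ksPolar S ∩ sphere (0 : EuclideanSpace ℝ (Fin n)) 1)) := by
    refine ((ksPolar_compact S).inter_right isClosed_sphere).image ?_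
    unfold ksRank
    fun_prop
  obtain ⟨φ, u, hφ, hu⟩ := geometric_hahn_banach_closed_point (convex_convexHull ℝ _)
    (ks_isCompact_convexHull hcomp).isClosed hp
  have hn' : (0 : ℝ) < n := by exact_mod_cast hn
  let H : Matrix (Fin n) (Fin n) ℝ := Matrix.of fun i j =>
    φ (Pi.single i (Pi.single j 1)) - if i = j then u else 0
  have hφx : ∀ x : Fin n → Fin n → ℝ, φ x = ∑ i, ∑ j, x i j * φ (Pi.single i (Pi.single j 1)) := by
    intro x
    have : x = ∑ i, ∑ j, x i j • (Pi.single i (Pi.single j 1) : Fin n → Fin n → ℝ) := by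
      ext a b
      simp [Finset.sum_apply, Pi.single_apply, ite_apply, Finset.sum_ite_eq]
    conv_lhs => rw [this]
    simp [map_sum]
  have htr : 0 < H.trace := by
    rw [hφx] at hu
    have h1 : H.trace = n * (∑ i : Fin n, ∑ j : Fin n, (if i = j then (1 / n : ℝ) else 0) *
        φ (Pi.single i (Pi.single j 1)) - u) := by
      simp only [Matrix.trace, Matrix.diag, H, Matrix.of_apply, ite_mul, zero_mul,
        Finset.sum_ite_eq, Finset.mem_univ, if_true, Finset.sum_sub_distrib, ← Finset.mul_sum]
      simp
      field_simp
    rw [h1]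
    exact mul_pos hn' (sub_pos.2 hu)
  let L := Matrix.toEuclideanCLM (n := Fin n) (𝕜 := ℝ) H
  have hq : ∀ f ∈ ksPolar S, ‖f‖ = 1 → inner ℝ f (L f) < 0 := by
    intro f hf hf1
    have h1 := hφ (ksRank f) (subset_convexHull ℝ _ ⟨f, ⟨hf, by simpa using hf1⟩, rfl⟩)
    have h2 : inner ℝ f (L f) = φ (ksRank f) - u * ‖f‖ ^ 2 := by
      rw [hφx, Matrix.inner_toEuclideanCLM, EuclideanSpace.real_norm_sq_eq]
      simp only [dotProduct, Matrix.mulVec, H, Matrix.of_apply, sub_mul, ite_mul, zero_mul,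
        Finset.sum_sub_distrib, Finset.sum_ite_eq, Finset.mem_univ, if_true, mul_sub,
        Finset.mul_sum, ksRank]
      congr 1
      · exact Finset.sum_congr rfl fun i _ => Finset.sum_congr rfl fun j _ => by ring
      · exact Finset.sum_congr rfl fun i _ => by ring
    rw [h2, hf1]; linarith
  have hq' : ∀ f ∈ ksPolar S, ‖f‖ = 1 → inner ℝ f (ContinuousLinearMap.adjoint L f) < 0 := by
    intro f hf hf1
    rw [ContinuousLinearMap.adjoint_inner_right, real_inner_comm]
    exact hq f hf hf1
  have ev := (ks_perturb _ (ksPolar_compact S) (fun f hf => hf.1) _ hq').and (ks_det H htr)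
  obtain ⟨t, ⟨ht1, ht2⟩, ht0⟩ :=
    ((ev.filter_mono nhdsWithin_le_nhds).and (self_mem_nhdsWithin (s := Set.Ioi (0 : ℝ)))).exists
  have ht0 : 0 < t := ht0
  have hdet := ht2 ht0
  let M : EuclideanSpace ℝ (Fin n) →ₗ[ℝ] EuclideanSpace ℝ (Fin n) :=
    Matrix.toEuclideanLin (1 + t • H)
  have hMdet : LinearMap.det M = (1 + t • H).det := by
    simp only [M, Matrix.toEuclideanLin_eq_toLin, LinearMap.det_toLin]
  have hM0 : LinearMap.det M ≠ 0 := by rw [hMdet]; linarith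
  have hMv : ∀ v, M v = v + t • L v := by
    intro v
    have h0 : L v = Matrix.toEuclideanLin H v := rfl
    simp only [M, h0, map_add, map_smul, LinearMap.add_apply, LinearMap.smul_apply]
    congr 1
    ext i
    simp
  let T : EuclideanSpace ℝ (Fin n) ≃ₗ[ℝ] X := (M.equivOfDetNeZero hM0).trans S
  have hT : ∀ v, T v = S (M v) := fun v => rfl
  have hle := hmax T (by
    rintro _ ⟨v, hv, rfl⟩
    rw [mem_closedBall_zero_iff] at hv ⊢
    obtain ⟨g, hg1, hg2⟩ := exists_dual_vector'' ℝ (T v)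
    let gS : EuclideanSpace ℝ (Fin n) →L[ℝ] ℝ :=
      g.comp (LinearMap.toContinuousLinearMap S.toLinearMap)
    let f := (InnerProductSpace.toDual ℝ (EuclideanSpace ℝ (Fin n))).symm gS
    have hf : ∀ w, inner ℝ f w = g (S w) := fun w => by
      simp [f, gS, InnerProductSpace.toDual_symm_apply]
    have hfle : ∀ w, inner ℝ f w ≤ ‖S w‖ := fun w => by
      rw [hf]
      calc g (S w) ≤ ‖g (S w)‖ := le_abs_self _
        _ ≤ 1 * ‖S w‖ := g.le_of_opNorm_le hg1 _
        _ = _ := one_mul _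
    have hfK : f ∈ ksPolar S := by
      refine ⟨?_, hfle⟩
      have h := (hfle f).trans (hS f)
      rw [real_inner_self_eq_norm_sq] at h
      by_contra hcon
      nlinarith
    have h := ht1 f hfK ht0
    have hg2' : g (T v) = ‖T v‖ := by simpa using hg2
    rw [← hg2', hT, ← hf, hMv]
    have : inner ℝ f (v + t • L v) = inner ℝ (f + t • ContinuousLinearMap.adjoint L f) v := by
      rw [inner_add_right, inner_add_left, inner_smul_right, real_inner_smul_left,
        ContinuousLinearMap.adjoint_inner_left]
    rw [this]
    refine (real_inner_le_norm _ _).trans ?_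
    exact mul_le_one₀ h (norm_nonneg _) hv)
  have hB0 : volume (e '' (S '' closedBall (0 : EuclideanSpace ℝ (Fin n)) 1)) ≠ 0 := by
    have : e '' (S '' closedBall (0 : EuclideanSpace ℝ (Fin n)) 1) =
      ((S.trans e).toLinearMap) '' closedBall (0 : EuclideanSpace ℝ (Fin n)) 1 := by
      rw [Set.image_image]; rfl
    rw [this, Measure.addHaar_image_linearMap]
    refine mul_ne_zero ?_ (measure_closedBall_pos _ _ one_pos).ne'
    have := (LinearEquiv.isUnit_det' (S.trans e)).ne_zero
    simpa using this
  have hBtop : volume (e '' (S '' closedBall (0 : EuclideanSpace ℝ (Fin n)) 1)) ≠ ⊤ := by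
    have : e '' (S '' closedBall (0 : EuclideanSpace ℝ (Fin n)) 1) =
      ((S.trans e).toLinearMap) '' closedBall (0 : EuclideanSpace ℝ (Fin n)) 1 := by
      rw [Set.image_image]; rfl
    rw [this, Measure.addHaar_image_linearMap]
    exact ENNReal.mul_ne_top ENNReal.ofReal_ne_top measure_closedBall_lt_top.ne
  have hvol : volume (e '' (T '' closedBall (0 : EuclideanSpace ℝ (Fin n)) 1)) =
      ENNReal.ofReal |LinearMap.det M| *
        volume (e '' (S '' closedBall (0 : EuclideanSpace ℝ (Fin n)) 1)) := by
    have h1 : e '' (T '' closedBall (0 : EuclideanSpace ℝ (Fin n)) 1) =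
      ((S.trans e).toLinearMap ∘ₗ M) '' closedBall (0 : EuclideanSpace ℝ (Fin n)) 1 := by
      rw [Set.image_image]; rfl
    have h2 : e '' (S '' closedBall (0 : EuclideanSpace ℝ (Fin n)) 1) =
      ((S.trans e).toLinearMap) '' closedBall (0 : EuclideanSpace ℝ (Fin n)) 1 := by
      rw [Set.image_image]; rfl
    rw [h1, h2, Measure.addHaar_image_linearMap, Measure.addHaar_image_linearMap,
      LinearMap.det_comp, abs_mul, ENNReal.ofReal_mul (abs_nonneg _)]
    ring
  rw [hvol, hMdet] at hle
  have hgt : 1 < ENNReal.ofReal |(1 + t • H).det| := by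
    rw [ENNReal.one_lt_ofReal]
    exact hdet.trans_le (le_abs_self _)
  have := ENNReal.mul_lt_mul_left hB0 hBtop hgt
  simp only [one_mul] at this
  exact absurd hle (not_le.2 this)

/-- Remark 1 (Kadets–Snobar): if `E` is an ellipsoid of maximal volume contained in
`B(X)`, then `√n • E` is a sufficient enlargement for `X`. (Volume is transported
to Lebesgue measure on `ℝⁿ` via the linear identification `e`.) -/
theorem statement14 {n : ℕ} {X : Type} [NormedAddCommGroup X] [NormedSpace ℝ X]
    (e : X ≃ₗ[ℝ] EuclideanSpace ℝ (Fin n)) (E : Set X)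
    (hE : ∃ S : EuclideanSpace ℝ (Fin n) ≃ₗ[ℝ] X,
      E = S '' closedBall (0 : EuclideanSpace ℝ (Fin n)) 1)
    (hEsub : E ⊆ closedBall (0 : X) 1)
    (hEmax : ∀ E' : Set X,
      (∃ S : EuclideanSpace ℝ (Fin n) ≃ₗ[ℝ] X,
        E' = S '' closedBall (0 : EuclideanSpace ℝ (Fin n)) 1) →
      E' ⊆ closedBall (0 : X) 1 → volume (e '' E') ≤ volume (e '' E)) :
    IsSufficientEnlargement (Real.sqrt n • E) := by
  obtain ⟨S, rfl⟩ := hE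
  intro Y _ _ _ i
  haveI : FiniteDimensional ℝ X := e.symm.finiteDimensional
  have hS : ∀ v, ‖S v‖ ≤ ‖v‖ := by
    intro v
    rcases eq_or_ne v 0 with rfl | hv
    · simp
    have hv' : 0 < ‖v‖ := norm_pos_iff.2 hv
    have h := hEsub ⟨‖v‖⁻¹ • v, by simp [norm_smul, hv'.ne'], rfl⟩
    rw [mem_closedBall_zero_iff, map_smul, norm_smul, norm_inv, norm_norm,
      inv_mul_le_iff₀ hv', mul_one] at h
    exact h
  rcases Nat.eq_zero_or_pos n with rfl | hn
  · haveI : Subsingleton X := e.toEquiv.subsingleton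
    refine ⟨0, fun x => Subsingleton.elim _ _, ?_⟩
    rintro x -
    refine ⟨0, ⟨0, by simp, by simp⟩, Subsingleton.elim _ _⟩
  have hn' : (0 : ℝ) < n := by exact_mod_cast hn
  have hj := ks_john hn e S hS (fun T hT => hEmax _ ⟨T, rfl⟩ hT)
  obtain ⟨ι, hι, z, w, hz, -, hw, hw1, hsum⟩ := eq_pos_convex_span_of_mem_convexHull hj
  have hz' : ∀ k, ∃ f, f ∈ ksPolar S ∧ ksRank f = z k := fun k => by
    obtain ⟨f, hf, hfz⟩ := hz ⟨k, rfl⟩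
    exact ⟨f, hf.1, hfz⟩
  choose f hfK hfz using hz'
  have hid : ∀ v, ∑ k, (w k * inner ℝ (f k) v) • f k = (1 / n : ℝ) • v := by
    intro v
    ext a
    have h1 : ∀ b, ∑ k, w k * (f k a * f k b) = if a = b then (1 / n : ℝ) else 0 := by
      intro b
      have := congrFun (congrFun hsum a) b
      simp only [Finset.sum_apply, Pi.smul_apply, smul_eq_mul, ← hfz, ksRank] at this
      exact this
    have h2 : ∑ b, (∑ k, w k * (f k a * f k b)) * v b = (1 / n : ℝ) * v a := by
      simp [h1]
    simp only [WithLp.ofLp_sum, WithLp.ofLp_smul, Finset.sum_apply, Pi.smul_apply, smul_eq_mul]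
    rw [← h2]
    simp only [PiLp.inner_apply, Finset.mul_sum, Finset.sum_mul]
    rw [Finset.sum_comm]
    refine Finset.sum_congr rfl fun b _ => Finset.sum_congr rfl fun k _ => ?_
    simp
    ring
  have hext : ∀ k, ∃ g : Y →L[ℝ] ℝ, (∀ x, g (i x) = inner ℝ (f k) (S.symm x)) ∧
      ∀ y, |g y| ≤ ‖y‖ := by
    intro k
    let g0 : X →ₗ[ℝ] ℝ := (innerSL ℝ (f k)).toLinearMap ∘ₗ S.symm.toLinearMap
    have hg0 : ∀ x, g0 x = inner ℝ (f k) (S.symm x) := fun x => rfl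
    let p := LinearMap.range i.toLinearMap
    let h0 : p →ₗ[ℝ] ℝ := g0 ∘ₗ i.equivRange.symm.toLinearEquiv.toLinearMap
    have hh0 : ∀ q : p, h0 q = g0 (i.equivRange.symm q) := fun q => rfl
    have hb : ∀ q : p, ‖h0 q‖ ≤ 1 * ‖q‖ := by
      intro q
      rw [hh0, ← i.equivRange.symm.norm_map q, one_mul, Real.norm_eq_abs, abs_le, hg0]
      have ha := (hfK k).2 (S.symm (i.equivRange.symm q))
      have hb := (hfK k).2 (-S.symm (i.equivRange.symm q))
      rw [inner_neg_right, map_neg, norm_neg] at hb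
      rw [S.apply_symm_apply] at ha hb
      exact ⟨by linarith, ha⟩
    obtain ⟨g, hg, hgn⟩ := exists_extension_norm_eq p (h0.mkContinuous 1 hb)
    refine ⟨g, fun x => ?_, fun y => ?_⟩
    · have := hg (i.equivRange x)
      simpa [hh0, hg0] using this
    · have h1 : ‖g‖ ≤ 1 := by
        rw [hgn]; exact LinearMap.mkContinuous_norm_le _ zero_le_one _
      simpa using g.le_of_opNorm_le h1 y
  choose g hg hgn using hext
  have hPapp : ∀ y, (∑ k, (((n : ℝ) * w k) • g k).smulRight (S (f k))) y =
      S (∑ k, ((n : ℝ) * w k * g k y) • f k) := by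
    intro y
    simp [ContinuousLinearMap.sum_apply, map_sum]
  refine ⟨∑ k, (((n : ℝ) * w k) • g k).smulRight (S (f k)), fun x => ?_, ?_⟩
  · rw [hPapp]
    have : ∑ k, ((n : ℝ) * w k * g k (i x)) • f k = S.symm x := by
      have h := congrArg (fun v => (n : ℝ) • v) (hid (S.symm x))
      simp only [Finset.smul_sum, smul_smul, ← mul_assoc] at h
      simp only [hg]
      rw [h, mul_one_div_cancel hn'.ne', one_smul]
    rw [this, S.apply_symm_apply]
  · rintro _ ⟨y, hy, rfl⟩
    rw [mem_closedBall_zero_iff] at hy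
    rw [hPapp]
    set s := Real.sqrt n with hs
    have hss : s * s = n := Real.mul_self_sqrt hn'.le
    let b := ∑ k, (s * w k * g k y) • f k
    refine ⟨S b, ⟨b, ?_, rfl⟩, ?_⟩
    · rw [mem_closedBall_zero_iff]
      have h1 : ‖b‖ ^ 2 = ∑ k, s * w k * g k y * inner ℝ (f k) b := by
        rw [← real_inner_self_eq_norm_sq]
        conv_lhs => arg 2; simp only [b]
        rw [sum_inner]
        simp only [real_inner_smul_left]
      have h2 : ∑ k, w k * inner ℝ (f k) b ^ 2 = (1 / n : ℝ) * ‖b‖ ^ 2 := by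
        have := congrArg (fun v => inner ℝ v b) (hid b)
        simp only [sum_inner, real_inner_smul_left, real_inner_self_eq_norm_sq] at this
        rw [← this]
        exact Finset.sum_congr rfl fun k _ => by ring
      have h3 : ∀ k, s * w k * g k y * inner ℝ (f k) b ≤
          w k * (1 / 2) + (n / 2) * (w k * inner ℝ (f k) b ^ 2) := by
        intro k
        have hg1 : (g k y) ^ 2 ≤ 1 := by
          rw [sq_le_one_iff_abs_le_one]; exact (hgn k y).trans hy
        have : s * g k y * inner ℝ (f k) b ≤ 1 / 2 + n / 2 * inner ℝ (f k) b ^ 2 := by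
          rw [← hss]
          nlinarith [sq_nonneg (g k y - s * inner ℝ (f k) b)]
        have := mul_le_mul_of_nonneg_left this (hw k).le
        nlinarith
      have h4 := Finset.sum_le_sum fun k (_ : k ∈ Finset.univ) => h3 k
      rw [← h1, Finset.sum_add_distrib, ← Finset.sum_mul, ← Finset.mul_sum, hw1, h2] at h4
      have h5 : (n / 2 : ℝ) * (1 / n * ‖b‖ ^ 2) = ‖b‖ ^ 2 / 2 := by field_simp
      rw [h5] at h4
      exact (sq_le_one_iff₀ (norm_nonneg _)).1 (by linarith)
    · change s • S b = _
      rw [← map_smul]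
      congr 1
      simp only [b, Finset.smul_sum, smul_smul]
      refine Finset.sum_congr rfl fun k _ => ?_
      rw [← hss]
      congr 1
      ring
end

section
/- Let X be ℝⁿ equipped with the ℓ¹ norm ‖x‖₁ = Σᵢ |xᵢ|. Then the closed Euclidean unit ball B(l₂ⁿ) = {x ∈ ℝⁿ : Σᵢ xᵢ² ≤ 1} is a sufficient enlargement for X. -/
open Set Metric MeasureTheory
open scoped Pointwise ENNReal

/-- The sign attached to a boolean. -/
def sgnB (b : Bool) : ℝ := if b then 1 else -1

lemma sgnB_not (b : Bool) : sgnB (!b) = - sgnB b := by cases b <;> simp [sgnB]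

lemma sgnB_sq (b : Bool) : sgnB b * sgnB b = 1 := by cases b <;> simp [sgnB]

lemma sgnB_abs (b : Bool) : |sgnB b| = 1 := by cases b <;> simp [sgnB]

/-- Orthogonality of Rademacher functions. -/
lemma sgnB_orth {n : ℕ} (j k : Fin n) :
    ∑ e : Fin n → Bool, sgnB (e j) * sgnB (e k) = if j = k then (2 : ℝ) ^ n else 0 := by
  split_ifs with h
  · subst h
    simp [sgnB_sq]
  · have hinv : Function.Involutive
        (fun e : Fin n → Bool => Function.update e k (!(e k))) := by
      intro e
      simp
    have h1 := Equiv.sum_comp (hinv.toPerm _) (fun e : Fin n → Bool => sgnB (e j) * sgnB (e k))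
    have h2 : ∀ e : Fin n → Bool, sgnB ((hinv.toPerm _) e j) * sgnB ((hinv.toPerm _) e k)
        = - (sgnB (e j) * sgnB (e k)) := by
      intro e
      simp [Function.Involutive.toPerm, Function.update_of_ne h, sgnB_not]
    simp only [h2, Finset.sum_neg_distrib] at h1
    linarith

/-- Norm-one extension of a functional along an isometric embedding. -/
lemma exists_ext_isom {X Y : Type*} [NormedAddCommGroup X] [NormedSpace ℝ X]
    [NormedAddCommGroup Y] [NormedSpace ℝ Y] (i : X →ₗᵢ[ℝ] Y) (f : X →ₗ[ℝ] ℝ)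
    (hf : ∀ x, |f x| ≤ ‖x‖) : ∃ g : Y →L[ℝ] ℝ, (∀ x, g (i x) = f x) ∧ ∀ y, |g y| ≤ ‖y‖ := by
  let F : LinearMap.range i.toLinearMap →L[ℝ] ℝ :=
    LinearMap.mkContinuous (f ∘ₗ i.equivRange.symm.toLinearEquiv.toLinearMap) 1 (by
      intro y
      have := hf (i.equivRange.symm y)
      rw [LinearIsometryEquiv.norm_map] at this
      simpa using this)
  obtain ⟨g, hg, hn⟩ := exists_extension_norm_eq _ F
  refine ⟨g, fun x => ?_, fun y => ?_⟩
  · have := hg (i.equivRange x)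
    have h2 : F (i.equivRange x) = f x := by
      change f (i.equivRange.symm (i.equivRange x)) = f x
      rw [LinearIsometryEquiv.symm_apply_apply]
    rw [h2] at this
    exact this
  · have h1 : ‖g‖ ≤ 1 := hn ▸ LinearMap.mkContinuous_norm_le _ zero_le_one _
    have := g.le_of_opNorm_le h1 y
    simpa using this

/-- Bessel's inequality for Rademacher functions. -/
lemma bessel_sgnB {n : ℕ} (g : (Fin n → Bool) → ℝ) (hg : ∀ e, |g e| ≤ 1) :
    ∑ k : Fin n, (((2 : ℝ) ^ n)⁻¹ * ∑ e, sgnB (e k) * g e) ^ 2 ≤ 1 := by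
  set c : Fin n → ℝ := fun k => ((2 : ℝ) ^ n)⁻¹ * ∑ e, sgnB (e k) * g e with hc
  have hN : (0 : ℝ) < 2 ^ n := by positivity
  have hck : ∀ k, ∑ e, sgnB (e k) * g e = 2 ^ n * c k := by
    intro k
    simp only [hc]
    field_simp
  have h0 : 0 ≤ ∑ e : Fin n → Bool, (g e - ∑ k, c k * sgnB (e k)) ^ 2 :=
    Finset.sum_nonneg fun _ _ => sq_nonneg _
  have h1 : ∑ e : Fin n → Bool, (g e) ^ 2 ≤ 2 ^ n := by
    calc ∑ e : Fin n → Bool, (g e) ^ 2 ≤ ∑ e : Fin n → Bool, (1 : ℝ) :=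
          Finset.sum_le_sum fun e _ => (sq_le_one_iff_abs_le_one _).2 (hg e)
      _ = 2 ^ n := by simp
  have h2 : ∑ e : Fin n → Bool, g e * ∑ k, c k * sgnB (e k) = 2 ^ n * ∑ k, c k ^ 2 := by
    simp only [Finset.mul_sum]
    rw [Finset.sum_comm]
    refine Finset.sum_congr rfl fun k _ => ?_
    calc ∑ e : Fin n → Bool, g e * (c k * sgnB (e k))
        = c k * ∑ e, sgnB (e k) * g e := by
          rw [Finset.mul_sum]
          exact Finset.sum_congr rfl fun e _ => by ring
      _ = _ := by rw [hck]; ring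
  have h3 : ∑ e : Fin n → Bool, (∑ k, c k * sgnB (e k)) ^ 2 = 2 ^ n * ∑ k, c k ^ 2 := by
    simp only [sq, Finset.sum_mul_sum]
    rw [Finset.mul_sum]
    rw [Finset.sum_comm]
    refine Finset.sum_congr rfl fun k _ => ?_
    rw [Finset.sum_comm]
    calc ∑ j, ∑ e : Fin n → Bool, c k * sgnB (e k) * (c j * sgnB (e j))
        = ∑ j, c k * c j * ∑ e : Fin n → Bool, sgnB (e k) * sgnB (e j) := by
          refine Finset.sum_congr rfl fun j _ => ?_
          rw [Finset.mul_sum]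
          exact Finset.sum_congr rfl fun e _ => by ring
      _ = _ := by
          simp only [sgnB_orth]
          simp
          ring
  have h4 : ∑ e : Fin n → Bool, (g e - ∑ k, c k * sgnB (e k)) ^ 2
      = ∑ e : Fin n → Bool, (g e) ^ 2 - 2 * (2 ^ n * ∑ k, c k ^ 2) + 2 ^ n * ∑ k, c k ^ 2 := by
    have h6 : ∑ e : Fin n → Bool, (g e) ^ 2 - 2 * (2 ^ n * ∑ k, c k ^ 2) + 2 ^ n * ∑ k, c k ^ 2
        = ∑ e : Fin n → Bool, (g e) ^ 2 - 2 * (∑ e : Fin n → Bool, g e * ∑ k, c k * sgnB (e k))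
          + ∑ e : Fin n → Bool, (∑ k, c k * sgnB (e k)) ^ 2 := by rw [h2, h3]
    rw [h6, Finset.mul_sum, ← Finset.sum_sub_distrib, ← Finset.sum_add_distrib]
    exact Finset.sum_congr rfl fun e _ => by ring
  have h5 : 2 ^ n * ∑ k, c k ^ 2 ≤ 2 ^ n * 1 := by linarith
  exact le_of_mul_le_mul_left h5 hN

/-- The Euclidean unit ball `B(l₂ⁿ)` is a sufficient enlargement for `l₁ⁿ`
(`ℝⁿ` with the norm `‖x‖₁ = Σᵢ |xᵢ|`). -/
theorem statement15 {n : ℕ} :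
    IsSufficientEnlargement
      {x : PiLp 1 (fun _ : Fin n => ℝ) | ∑ i, (x i) ^ 2 ≤ 1} := by
  intro Y _ _ _ i
  have hex : ∀ e : Fin n → Bool, ∃ g : Y →L[ℝ] ℝ,
      (∀ x, g (i x) = ∑ j, sgnB (e j) * x j) ∧ ∀ y, |g y| ≤ ‖y‖ := by
    intro e
    let f : PiLp 1 (fun _ : Fin n => ℝ) →ₗ[ℝ] ℝ :=
      { toFun := fun x => ∑ j, sgnB (e j) * x j
        map_add' := by
          intro x y
          simp [mul_add, Finset.sum_add_distrib]
        map_smul' := by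
          intro a x
          simp only [PiLp.smul_apply, smul_eq_mul, RingHom.id_apply, Finset.mul_sum]
          exact Finset.sum_congr rfl fun j _ => by ring }
    refine exists_ext_isom i f fun x => ?_
    have hx : ‖x‖ = ∑ j, |x j| := by
      rw [PiLp.norm_eq_of_L1]
      rfl
    rw [hx]
    change |∑ j, sgnB (e j) * x j| ≤ _
    refine (Finset.abs_sum_le_sum_abs (fun j => sgnB (e j) * x j) Finset.univ).trans_eq ?_
    simp [abs_mul, sgnB_abs]
  choose g hg1 hg2 using hex
  let Q : Y →L[ℝ] (Fin n → ℝ) :=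
    ContinuousLinearMap.pi fun k => ((2 : ℝ) ^ n)⁻¹ • ∑ e, sgnB (e k) • g e
  have hQ : ∀ y k, Q y k = ((2 : ℝ) ^ n)⁻¹ * ∑ e, sgnB (e k) * g e y := by
    intro y k
    simp [Q]
  let P : Y →L[ℝ] PiLp 1 (fun _ : Fin n => ℝ) :=
    (PiLp.continuousLinearEquiv 1 ℝ (fun _ : Fin n => ℝ)).symm.toContinuousLinearMap.comp Q
  have hP : ∀ y k, P y k = ((2 : ℝ) ^ n)⁻¹ * ∑ e, sgnB (e k) * g e y := hQ
  refine ⟨P, fun x => ?_, ?_⟩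
  · ext k
    rw [hP]
    simp only [hg1, Finset.mul_sum]
    rw [Finset.sum_comm]
    calc ∑ j, ∑ e : Fin n → Bool, ((2 : ℝ) ^ n)⁻¹ * (sgnB (e k) * (sgnB (e j) * x j))
        = ∑ j, ((2 : ℝ) ^ n)⁻¹ * x j * ∑ e : Fin n → Bool, sgnB (e k) * sgnB (e j) := by
          refine Finset.sum_congr rfl fun j _ => ?_
          rw [Finset.mul_sum]
          exact Finset.sum_congr rfl fun e _ => by ring
      _ = x k := by
          simp only [sgnB_orth]
          simp
          field_simp
  · rintro _ ⟨y, hy, rfl⟩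
    have hy' : ‖y‖ ≤ 1 := by simpa using hy
    change ∑ k, (P y k) ^ 2 ≤ 1
    simp only [hP]
    exact bessel_sgnB (fun e => g e y) fun e => (hg2 e y).trans hy'
end
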